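/- Let A = diag(a₁,…,aₙ), ε ∈ ℝ, and let e₁(t), e₂(t), p₁(t), p₂(t) be differentiable curves in ℝⁿ satisfying for all t the constraints (e_i, e_j) = δ_{ij} and (e_i, p_j) + (e_j, p_i) = 0 (i,j = 1,2), and the magnetic Neumann equations with the Euclidean metric on V_{n,2}: ė₁ = p₁, ė₂ = p₂, ṗ₁ = −Ae₁ + ((e₁,Ae₁) − (p₁,p₁) − ε(e₁,p₂))e₁ + ((e₁,Ae₂) − (p₁,p₂))e₂ + εp₂, ṗ₂ = −Ae₂ + ((e₁,Ae₂) − (p₁,p₂))e₁ + ((e₂,Ae₂) − (p₂,p₂) + ε(e₂,p₁))e₂ − εp₁. Then, with Φ_ε = p₁∧e₁ + p₂∧e₂ + ε·e₁∧e₂ and S = e₁⊗e₁ + e₂⊗e₂, one has d/dt Φ_ε = [S, A] and d/dt S = [Φ_ε, S]; consequently for every real λ the Lax equation d/dt (λΦ_ε + S − λ²A) = [Φ_ε − λA, λΦ_ε + S − λ²A] holds. -/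

import Mathlib

open Matrix

/-!
Collect the vectors as columns, `X = [e₁ e₂]` and `P = [p₁ p₂]`. The system becomes `Ẋ = P`,
`Ṗ = -A X + X Λ - P K`, where `Λ` is a symmetric matrix of Lagrange multipliers and
`K = ε e₁ ∧ e₂` (standard basis of `ℝ²`) is skew, while `Φ = P Xᵀ - X Pᵀ + X K Xᵀ` and `S = X Xᵀ`.
In `Φ̇` the terms `P Pᵀ` cancel, those with `Λ` cancel because `Λ` is symmetric, and those with `K`
cancel because `K` is skew, which leaves `[S, A]`. For `Ṡ` one uses `Xᵀ X = 1` and its derivative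
`Pᵀ X + Xᵀ P = 0`. The bracket with spectral parameter `λ` expands to `λ [S, A] + [Φ, S]`.
-/

section LieAlgebra

variable {R L : Type*} [CommRing R] [LieRing L] [LieAlgebra R L]

theorem lie_sub_smul_smul_add_sub_sq_smul (c : R) (x s a : L) :
    ⁅x - c • a, c • x + s - c ^ 2 • a⁆ = c • ⁅s, a⁆ + ⁅x, s⁆ := by
  simp only [sub_lie, lie_sub, lie_add, smul_lie, lie_smul, lie_self, ← lie_skew a x,
    ← lie_skew a s]
  module

end LieAlgebra

section MatrixDerivative

variable {𝕜 l m n : Type*} [NontriviallyNormedField 𝕜]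

-- `HasDerivAt` depends only on the topology of the matrix space; a norm merely gives access to the
-- calculus lemmas stated for normed spaces.
open scoped Matrix.Norms.Elementwise in
theorem hasDerivAt_matrix [Finite n] {M : 𝕜 → Matrix m n 𝕜} {M' : Matrix m n 𝕜} {t : 𝕜} :
    HasDerivAt M M' t ↔ ∀ i j, HasDerivAt (fun s => M s i j) (M' i j) t := by
  cases nonempty_fintype n
  exact hasDerivAt_pi.trans (forall_congr' fun _ => hasDerivAt_pi)

theorem hasDerivAt_matrix_mul [Fintype m] [Finite n]
    {M : 𝕜 → Matrix l m 𝕜} {N : 𝕜 → Matrix m n 𝕜} {M' : Matrix l m 𝕜} {N' : Matrix m n 𝕜} {t : 𝕜}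
    (hM : HasDerivAt M M' t) (hN : HasDerivAt N N' t) :
    HasDerivAt (fun s => M s * N s) (M' * N t + M t * N') t := by
  rw [hasDerivAt_matrix] at hM hN ⊢
  intro i j
  simp only [mul_apply, Matrix.add_apply, ← Finset.sum_add_distrib]
  exact HasDerivAt.fun_sum fun k _ => (hM i k).mul (hN k j)

theorem hasDerivAt_matrix_transpose [Finite m] [Finite n]
    {M : 𝕜 → Matrix m n 𝕜} {M' : Matrix m n 𝕜} {t : 𝕜}
    (hM : HasDerivAt M M' t) : HasDerivAt (fun s => (M s)ᵀ) M'ᵀ t :=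
  hasDerivAt_matrix.2 fun i j => hasDerivAt_matrix.1 hM j i

theorem hasDerivAt_mul_transpose_self [Finite m] [Fintype n]
    {X : 𝕜 → Matrix m n 𝕜} {X' : Matrix m n 𝕜} {t : 𝕜} (hX : HasDerivAt X X' t) :
    HasDerivAt (fun s => X s * (X s)ᵀ) (X' * (X t)ᵀ + X t * X'ᵀ) t :=
  hasDerivAt_matrix_mul hX (hasDerivAt_matrix_transpose hX)

theorem transpose_mul_add_transpose_mul_eq_zero_of_hasDerivAt [Fintype m] [Finite n]
    [DecidableEq n] {X : 𝕜 → Matrix m n 𝕜} {X' : Matrix m n 𝕜} {t : 𝕜}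
    (hX : ∀ s, (X s)ᵀ * X s = 1) (hX' : HasDerivAt X X' t) :
    X'ᵀ * X t + (X t)ᵀ * X' = 0 := by
  have h := hasDerivAt_matrix_mul (hasDerivAt_matrix_transpose hX') hX'
  simp only [hX] at h
  ext i j
  exact (hasDerivAt_matrix.1 h i j).unique (hasDerivAt_const t _)

end MatrixDerivative

section StiefelManifold

variable {R m n : Type*} [CommRing R] [Fintype n]

/-- The magnetic momentum of an `n`-frame: for real matrices, the momentum mapping of the left
orthogonal action on the cotangent bundle of the Stiefel manifold, twisted by a magnetic term. The
vectors of the frame and their momenta are the columns of `X` and `P`, and the entry `K i j` is the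
coefficient of `eᵢ ⊗ eⱼ` in the magnetic term, so `K` is skew-symmetric in the applications. -/
def magneticMomentum (K : Matrix n n R) (X P : Matrix m n R) : Matrix m m R :=
  P * Xᵀ - X * Pᵀ + X * K * Xᵀ

theorem commutator_magneticMomentum_mul_transpose [Fintype m] [DecidableEq n] (K : Matrix n n R)
    {X P : Matrix m n R} (hX : Xᵀ * X = 1) (hP : Pᵀ * X + Xᵀ * P = 0) :
    magneticMomentum K X P * (X * Xᵀ) - X * Xᵀ * magneticMomentum K X P = P * Xᵀ + X * Pᵀ := by
  have hΦX : magneticMomentum K X P * X = P - X * (Pᵀ * X) + X * K := by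
    simp only [magneticMomentum, Matrix.add_mul, Matrix.sub_mul, Matrix.mul_assoc, hX,
      Matrix.mul_one]
  have hXΦ : Xᵀ * magneticMomentum K X P = Xᵀ * P * Xᵀ - Pᵀ + K * Xᵀ := by
    simp only [magneticMomentum, Matrix.mul_add, Matrix.mul_sub, ← Matrix.mul_assoc, hX,
      Matrix.one_mul]
  calc magneticMomentum K X P * (X * Xᵀ) - X * Xᵀ * magneticMomentum K X P
      = (P - X * (Pᵀ * X) + X * K) * Xᵀ - X * (Xᵀ * P * Xᵀ - Pᵀ + K * Xᵀ) := by
        rw [← Matrix.mul_assoc, hΦX, Matrix.mul_assoc X Xᵀ, hXΦ]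
    _ = P * Xᵀ + X * Pᵀ - X * (Pᵀ * X + Xᵀ * P) * Xᵀ := by
        simp only [Matrix.add_mul, Matrix.sub_mul, Matrix.mul_add, Matrix.mul_sub,
          Matrix.mul_assoc]
        abel
    _ = P * Xᵀ + X * Pᵀ := by rw [hP, Matrix.mul_zero, Matrix.zero_mul, sub_zero]

variable {𝕜 : Type*} [NontriviallyNormedField 𝕜] [Fintype m]

open scoped Matrix.Norms.Elementwise in
theorem hasDerivAt_magneticMomentum {A : Matrix m m 𝕜} {K Λ : Matrix n n 𝕜}
    {X P : 𝕜 → Matrix m n 𝕜} {t : 𝕜} (hA : A.IsSymm) (hK : Kᵀ = -K) (hΛ : Λ.IsSymm)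
    (hX : HasDerivAt X (P t) t) (hP : HasDerivAt P (-(A * X t) + X t * Λ - P t * K) t) :
    HasDerivAt (fun s => magneticMomentum K (X s) (P s))
      (X t * (X t)ᵀ * A - A * (X t * (X t)ᵀ)) t := by
  have hXt := hasDerivAt_matrix_transpose hX
  have hXK := hasDerivAt_matrix_mul hX (hasDerivAt_const t K)
  refine (((hasDerivAt_matrix_mul hP hXt).sub (hasDerivAt_matrix_mul hX
    (hasDerivAt_matrix_transpose hP))).add (hasDerivAt_matrix_mul hXK hXt)).congr_deriv ?_
  simp only [transpose_add, transpose_sub, transpose_neg, transpose_mul, hA.eq, hK, hΛ.eq,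
    Matrix.add_mul, Matrix.sub_mul, Matrix.mul_add, Matrix.mul_sub, Matrix.neg_mul,
    Matrix.mul_neg, Matrix.mul_zero, Matrix.zero_mul, Matrix.mul_assoc]
  abel

open scoped Matrix.Norms.Elementwise in
theorem magnetic_neumann_lax_general [DecidableEq n]
    {A : Matrix m m 𝕜} {K : Matrix n n 𝕜} {X P : 𝕜 → Matrix m n 𝕜} {Λ : 𝕜 → Matrix n n 𝕜}
    {Φ S : 𝕜 → Matrix m m 𝕜} (hA : A.IsSymm) (hK : Kᵀ = -K) (hΛ : ∀ t, (Λ t).IsSymm)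
    (hX : ∀ t, (X t)ᵀ * X t = 1) (hX' : ∀ t, HasDerivAt X (P t) t)
    (hP' : ∀ t, HasDerivAt P (-(A * X t) + X t * Λ t - P t * K) t)
    (hΦ : ∀ t, Φ t = magneticMomentum K (X t) (P t)) (hS : ∀ t, S t = X t * (X t)ᵀ) :
    (∀ t, HasDerivAt Φ (S t * A - A * S t) t) ∧
    (∀ t, HasDerivAt S (Φ t * S t - S t * Φ t) t) ∧
    (∀ (c t : 𝕜), HasDerivAt (fun s => c • Φ s + S s - c ^ 2 • A)
      ((Φ t - c • A) * (c • Φ t + S t - c ^ 2 • A)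
        - (c • Φ t + S t - c ^ 2 • A) * (Φ t - c • A)) t) := by
  classical
  have hΦ' (t : 𝕜) : HasDerivAt Φ (S t * A - A * S t) t := by
    rw [funext hΦ, hS]
    exact hasDerivAt_magneticMomentum hA hK (hΛ t) (hX' t) (hP' t)
  have hS' (t : 𝕜) : HasDerivAt S (Φ t * S t - S t * Φ t) t := by
    rw [hΦ, hS, commutator_magneticMomentum_mul_transpose K (hX t)
      (transpose_mul_add_transpose_mul_eq_zero_of_hasDerivAt hX (hX' t)), funext hS]
    exact hasDerivAt_mul_transpose_self (hX' t)
  refine ⟨hΦ', hS', fun c t => ?_⟩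
  let _ : LieRing (Matrix m m 𝕜) := LieRing.ofAssociativeRing
  refine ((((hΦ' t).const_smul c).add (hS' t)).sub_const (c ^ 2 • A)).congr_deriv ?_
  exact (lie_sub_smul_smul_add_sub_sq_smul c (Φ t) (S t) A).symm

end StiefelManifold

section TwoFrame

variable {R l m : Type*} [CommRing R]

/-- The matrix with columns `v` and `w`, which encodes a pair of vectors such as a `2`-frame. -/
def columnPair (v w : m → R) : Matrix m (Fin 2) R :=
  (of ![v, w])ᵀ

/-- The coefficient matrix of the magnetic term `ε e₁ ∧ e₂` in the frame `(e₁, e₂)`. -/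
def magneticTerm (ε : R) : Matrix (Fin 2) (Fin 2) R :=
  !![0, ε; -ε, 0]

theorem magneticTerm_transpose (ε : R) : (magneticTerm ε)ᵀ = -magneticTerm ε := by
  ext i j
  fin_cases i <;> fin_cases j <;> simp [magneticTerm]

theorem neg_columnPair (v w : m → R) : -columnPair v w = columnPair (-v) (-w) := by
  ext i j
  fin_cases j <;> rfl

theorem columnPair_add_columnPair (u v w x : m → R) :
    columnPair u v + columnPair w x = columnPair (u + w) (v + x) := by
  ext i j
  fin_cases j <;> rfl

theorem columnPair_sub_columnPair (u v w x : m → R) :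
    columnPair u v - columnPair w x = columnPair (u - w) (v - x) := by
  ext i j
  fin_cases j <;> rfl

theorem columnPair_mul_transpose_columnPair (u v w x : m → R) :
    columnPair u v * (columnPair w x)ᵀ = vecMulVec u w + vecMulVec v x := by
  ext i j
  simp [columnPair, mul_apply, Fin.sum_univ_two, vecMulVec_apply]

theorem transpose_columnPair_mul_columnPair [Fintype m] (u v w x : m → R) :
    (columnPair u v)ᵀ * columnPair w x = !![u ⬝ᵥ w, u ⬝ᵥ x; v ⬝ᵥ w, v ⬝ᵥ x] := by
  ext i j
  fin_cases i <;> fin_cases j <;> rfl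

theorem mul_columnPair [Fintype m] (A : Matrix l m R) (v w : m → R) :
    A * columnPair v w = columnPair (A *ᵥ v) (A *ᵥ w) := by
  ext i j
  fin_cases j <;> rfl

theorem columnPair_mul_fin_two (v w : m → R) (a b c d : R) :
    columnPair v w * !![a, b; c, d] = columnPair (a • v + c • w) (b • v + d • w) := by
  ext i j
  fin_cases j <;> simp [columnPair, mul_apply, Fin.sum_univ_two, mul_comm]

theorem magneticMomentum_columnPair (ε : R) (e₁ e₂ p₁ p₂ : m → R) :
    magneticMomentum (magneticTerm ε) (columnPair e₁ e₂) (columnPair p₁ p₂) =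
      (vecMulVec p₁ e₁ - vecMulVec e₁ p₁) + (vecMulVec p₂ e₂ - vecMulVec e₂ p₂)
        + ε • (vecMulVec e₁ e₂ - vecMulVec e₂ e₁) := by
  simp only [magneticMomentum, magneticTerm, columnPair_mul_fin_two,
    columnPair_mul_transpose_columnPair, add_vecMulVec, smul_vecMulVec]
  module

theorem columnPair_neumann_force [Fintype m] (A : Matrix m m R) (ε a b c : R)
    (e₁ e₂ p₁ p₂ : m → R) :
    columnPair (-(A *ᵥ e₁) + a • e₁ + b • e₂ + ε • p₂) (-(A *ᵥ e₂) + b • e₁ + c • e₂ - ε • p₁) =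
      -(A * columnPair e₁ e₂) + columnPair e₁ e₂ * !![a, b; b, c]
        - columnPair p₁ p₂ * magneticTerm ε := by
  rw [magneticTerm, mul_columnPair, columnPair_mul_fin_two, columnPair_mul_fin_two,
    neg_columnPair, columnPair_add_columnPair, columnPair_sub_columnPair]
  congr 1 <;> module

theorem hasDerivAt_columnPair {𝕜 : Type*} [NontriviallyNormedField 𝕜]
    {v w : 𝕜 → m → 𝕜} {v' w' : m → 𝕜} {t : 𝕜}
    (hv : ∀ i, HasDerivAt (fun s => v s i) (v' i) t)
    (hw : ∀ i, HasDerivAt (fun s => w s i) (w' i) t) :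
    HasDerivAt (fun s => columnPair (v s) (w s)) (columnPair v' w') t := by
  refine hasDerivAt_matrix.2 fun i j => ?_
  fin_cases j
  exacts [hv i, hw i]

end TwoFrame

/-- For the magnetic Neumann system with the Euclidean metric on V_{n,2},
the magnetic momentum Φ_ε = p₁∧e₁ + p₂∧e₂ + ε e₁∧e₂ and S = e₁⊗e₁ + e₂⊗e₂ satisfy
d/dt Φ_ε = [S, A], d/dt S = [Φ_ε, S], and hence the Lax equation
d/dt (λΦ_ε + S − λ²A) = [Φ_ε − λA, λΦ_ε + S − λ²A] for every real λ. -/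
theorem magnetic_neumann_lax {n : ℕ} (a : Fin n → ℝ)
    (A : Matrix (Fin n) (Fin n) ℝ) (hA : A = Matrix.diagonal a)
    (ε : ℝ) (e₁ e₂ p₁ p₂ : ℝ → Fin n → ℝ)
    (hc11 : ∀ t, e₁ t ⬝ᵥ e₁ t = 1) (hc22 : ∀ t, e₂ t ⬝ᵥ e₂ t = 1)
    (hc12 : ∀ t, e₁ t ⬝ᵥ e₂ t = 0)
    (hcp11 : ∀ t, e₁ t ⬝ᵥ p₁ t + e₁ t ⬝ᵥ p₁ t = 0)
    (hcp12 : ∀ t, e₁ t ⬝ᵥ p₂ t + e₂ t ⬝ᵥ p₁ t = 0)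
    (hcp22 : ∀ t, e₂ t ⬝ᵥ p₂ t + e₂ t ⬝ᵥ p₂ t = 0)
    (he₁ : ∀ t i, HasDerivAt (fun s => e₁ s i) (p₁ t i) t)
    (he₂ : ∀ t i, HasDerivAt (fun s => e₂ s i) (p₂ t i) t)
    (hp₁ : ∀ t i, HasDerivAt (fun s => p₁ s i)
      ((-(A *ᵥ e₁ t)
        + ((e₁ t ⬝ᵥ (A *ᵥ e₁ t)) - (p₁ t ⬝ᵥ p₁ t) - ε * (e₁ t ⬝ᵥ p₂ t)) • e₁ t
        + ((e₁ t ⬝ᵥ (A *ᵥ e₂ t)) - (p₁ t ⬝ᵥ p₂ t)) • e₂ t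
        + ε • p₂ t) i) t)
    (hp₂ : ∀ t i, HasDerivAt (fun s => p₂ s i)
      ((-(A *ᵥ e₂ t)
        + ((e₁ t ⬝ᵥ (A *ᵥ e₂ t)) - (p₁ t ⬝ᵥ p₂ t)) • e₁ t
        + ((e₂ t ⬝ᵥ (A *ᵥ e₂ t)) - (p₂ t ⬝ᵥ p₂ t) + ε * (e₂ t ⬝ᵥ p₁ t)) • e₂ t
        - ε • p₁ t) i) t)
    (Φε S : ℝ → Matrix (Fin n) (Fin n) ℝ)
    (hΦε : ∀ t, Φε t =
      (Matrix.vecMulVec (p₁ t) (e₁ t) - Matrix.vecMulVec (e₁ t) (p₁ t))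
      + (Matrix.vecMulVec (p₂ t) (e₂ t) - Matrix.vecMulVec (e₂ t) (p₂ t))
      + ε • (Matrix.vecMulVec (e₁ t) (e₂ t) - Matrix.vecMulVec (e₂ t) (e₁ t)))
    (hS : ∀ t, S t = Matrix.vecMulVec (e₁ t) (e₁ t) + Matrix.vecMulVec (e₂ t) (e₂ t)) :
    (∀ t i j, HasDerivAt (fun s => Φε s i j) ((S t * A - A * S t) i j) t) ∧
    (∀ t i j, HasDerivAt (fun s => S s i j) ((Φε t * S t - S t * Φε t) i j) t) ∧
    (∀ (lam : ℝ) (t : ℝ) (i j : Fin n),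
      HasDerivAt (fun s => (lam • Φε s + S s - lam ^ 2 • A) i j)
        (((Φε t - lam • A) * (lam • Φε t + S t - lam ^ 2 • A)
          - (lam • Φε t + S t - lam ^ 2 • A) * (Φε t - lam • A)) i j) t) := by
  have hA' : A.IsSymm := hA ▸ isSymm_diagonal a
  have horth (t : ℝ) : (columnPair (e₁ t) (e₂ t))ᵀ * columnPair (e₁ t) (e₂ t) = 1 := by
    rw [transpose_columnPair_mul_columnPair, hc11, hc12, dotProduct_comm (e₂ t), hc12,
      hc22, one_fin_two]
  have hp (t : ℝ) := hasDerivAt_columnPair (hp₁ t) (hp₂ t)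
  simp only [columnPair_neumann_force] at hp
  simpa only [hasDerivAt_matrix] using magnetic_neumann_lax_general hA'
    (magneticTerm_transpose ε) (fun t => IsSymm.ext (by simp [Fin.forall_fin_two])) horth
    (fun t => hasDerivAt_columnPair (he₁ t) (he₂ t)) hp
    (fun t => (hΦε t).trans (magneticMomentum_columnPair ..).symm)
    (fun t => (hS t).trans (columnPair_mul_transpose_columnPair ..).symm)
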